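/- arXiv:1111.3106 — 3 statements merged into one kernel-verified Lean document; each statement's English description precedes it below -/
import Mathlib

section
/- The safe transition relation introduces no new deadlocks on good states: if s ∈ G and s is not a deadlock of N, then there exists a transition t with (s,t) ∈ R, i.e., t is enabled at s, (s,t) ∈ I, and s →t s' for some s' ∈ G. -/
/-!
A good state `s` lies outside `attr*(∅)`: it is either the initial state or the target of an
`I_G`-step (`good_not_mem_attrStar`). The attractor iterates form an increasing chain, and since `T`
is finite, `attr*(∅)` is closed under the last clause of `attr` (`exists_IG_step`): if every
`I`-respecting transition enabled at a non-deadlock `s` led into `attr*(∅)`, they would all lead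
into one common iterate, and `s` would belong to the next. Hence some `t` has `(s, t) ∈ I_G`.
Finally, the run that reached `s` can be rerouted through `t` and continued greedily until no
`I_G`-step remains, so the target of `t` lies on a maximal `I_G`-restricted execution
(`fire_mem_reachRestr`) and is therefore good.
-/

open Set

/-- A 1-safe Petri net: places `P`, transitions `T`, the flow relation
`E ⊆ (P×T) ∪ (T×P)` (split into its two components), and an initial state
`s0 ⊆ P`.  States are subsets of `P`. -/
structure PetriNet (P T : Type) where
  flowPT : Set (P × T)
  flowTP : Set (T × P)
  s0 : Set P

/-- An alternating sequence of states and transitions, of (possibly infinite)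
length `len` (= number of transitions); the states are `state 0, …, state len`. -/
structure Run (P T : Type) where
  len : ℕ∞
  state : ℕ → Set P
  trans : ℕ → T

/-- A finite alternating sequence of states and transitions (a history):
states `state 0, …, state len` and transitions `trans 0, …, trans (len-1)`. -/
structure Hist (P T : Type) where
  len : ℕ
  state : ℕ → Set P
  trans : ℕ → T

namespace PetriNet

variable {P T : Type} (N : PetriNet P T)

/-- The input places `•t` of a transition. -/
def inp (t : T) : Set P := {p | (p, t) ∈ N.flowPT}

/-- The output places `t•` of a transition. -/
def out (t : T) : Set P := {p | (t, p) ∈ N.flowTP}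

/-- `t` is enabled in `s` iff `•t ⊆ s` and `t• ∩ s ⊆ •t`. -/
def Enabled (s : Set P) (t : T) : Prop := N.inp t ⊆ s ∧ N.out t ∩ s ⊆ N.inp t

/-- The state obtained by firing `t` in `s`: `(s \ •t) ∪ t•`. -/
def fire (s : Set P) (t : T) : Set P := (s \ N.inp t) ∪ N.out t

/-- `s →t s'`: `t` is enabled at `s` and firing it yields `s'`. -/
def Step (s : Set P) (t : T) (s' : Set P) : Prop := N.Enabled s t ∧ s' = N.fire s t

/-- A state is a deadlock if no transition is enabled in it. -/
def Deadlock (s : Set P) : Prop := ∀ t, ¬ N.Enabled s t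

/-- `r` starts at the initial state and follows the firing rule. -/
def IsRun (r : Run P T) : Prop :=
  r.state 0 = N.s0 ∧
    ∀ i : ℕ, (i : ℕ∞) < r.len → N.Step (r.state i) (r.trans i) (r.state (i + 1))

/-- An execution: a maximal run (it is either infinite or ends in a deadlock). -/
def IsExec (r : Run P T) : Prop :=
  N.IsRun r ∧ ∀ n : ℕ, r.len = (n : ℕ∞) → N.Deadlock (r.state n)

/-- A run all of whose steps `(sᵢ, tᵢ₊₁)` lie in `I`. -/
def IsRunRestr (I : Set (Set P × T)) (r : Run P T) : Prop :=
  N.IsRun r ∧ ∀ i : ℕ, (i : ℕ∞) < r.len → (r.state i, r.trans i) ∈ I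

/-- An `I`-restricted execution: a maximal `I`-respecting run (it is either
infinite or ends in a state from which no enabled transition respects `I`). -/
def IsExecRestr (I : Set (Set P × T)) (r : Run P T) : Prop :=
  N.IsRunRestr I r ∧ ∀ n : ℕ, r.len = (n : ℕ∞) →
    ¬ ∃ t, N.Enabled (r.state n) t ∧ (r.state n, t) ∈ I

end PetriNet

namespace Run

variable {P T : Type}

/-- State `s` occurs on the run `r`. -/
def Mem (r : Run P T) (s : Set P) : Prop := ∃ i : ℕ, (i : ℕ∞) ≤ r.len ∧ s = r.state i

/-- `r` is a prefix of `r'`. -/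
def IsPrefix (r r' : Run P T) : Prop :=
  r.len ≤ r'.len ∧ (∀ i : ℕ, (i : ℕ∞) ≤ r.len → r.state i = r'.state i) ∧
    ∀ i : ℕ, (i : ℕ∞) < r.len → r.trans i = r'.trans i

end Run

namespace PetriNet

variable {P T : Type} (N : PetriNet P T)

/-- `reach(N)`: the states occurring on executions of `N`. -/
def reach : Set (Set P) := {s | ∃ r : Run P T, N.IsExec r ∧ r.Mem s}

/-- `reach_I(N)`: the states occurring on `I`-restricted executions of `N`. -/
def reachRestr (I : Set (Set P × T)) : Set (Set P) :=
  {s | ∃ r : Run P T, N.IsExecRestr I r ∧ r.Mem s}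

/-- The neighborhood of a set of processes (a process is a subset of `T`). -/
def ngb (Pi : Set (Set T)) : Set P := ⋃ π ∈ Pi, ⋃ t ∈ π, (N.inp t ∪ N.out t)

/-- The places owned by `Pi`, relative to the covering set `C` of processes. -/
def own (C Pi : Set (Set T)) : Set P := N.ngb Pi \ N.ngb (C \ Pi)

/-- The local information `s⌈_Π = s ∩ ngb(Π)`. -/
def locInfo (Pi : Set (Set T)) (s : Set P) : Set P := s ∩ N.ngb Pi

/-- The local state `s⌊_Π = s ∩ own(Π)`. -/
def locState (C Pi : Set (Set T)) (s : Set P) : Set P := s ∩ N.own C Pi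

/-- Weak knowledge `K^w_Π ψ` at `s`, relative to the reachable states. -/
def Kw (Pi : Set (Set T)) (ψ : Set P → Prop) (s : Set P) : Prop :=
  ∀ s' ∈ N.reach, N.locInfo Pi s' = N.locInfo Pi s → ψ s'

/-- Strong knowledge `K^s_Π ψ` at `s`, relative to the reachable states. -/
def Ks (C Pi : Set (Set T)) (ψ : Set P → Prop) (s : Set P) : Prop :=
  ∀ s' ∈ N.reach, N.locState C Pi s' = N.locState C Pi s → ψ s'

/-- One step of the attractor (for invariant `I` and uncontrollable
transitions `uc`): `s ∈ attr(A)` iff `s ∈ A`, or some enabled uncontrollable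
transition leads into `A` or violates `I`, or `s` is no deadlock and every
enabled `I`-respecting transition leads into `A`. -/
def attr (I : Set (Set P × T)) (uc : Set T) (A : Set (Set P)) : Set (Set P) :=
  {s | s ∈ A ∨
       (∃ t ∈ uc, N.Enabled s t ∧ (N.fire s t ∈ A ∨ (s, t) ∉ I)) ∨
       (¬ N.Deadlock s ∧ ∀ t, N.Enabled s t → (s, t) ∈ I → N.fire s t ∈ A)}

/-- `attr*(∅)`: the least fixpoint of `attr`, obtained by iterating from `∅`. -/
def attrStar (I : Set (Set P × T)) (uc : Set T) : Set (Set P) :=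
  ⋃ n : ℕ, (N.attr I uc)^[n] ∅

/-- `I_G = {(s,t) ∈ I | s →t s' and s' ∉ attr*(∅)}`. -/
def IG (I : Set (Set P × T)) (uc : Set T) : Set (Set P × T) :=
  {p ∈ I | N.Enabled p.1 p.2 ∧ N.fire p.1 p.2 ∉ N.attrStar I uc}

/-- The good states: `G = reach_{I_G}(N)` if `s0 ∉ attr*(∅)`, else `G = ∅`. -/
def good (I : Set (Set P × T)) (uc : Set T) : Set (Set P) :=
  {s | N.s0 ∉ N.attrStar I uc ∧ s ∈ N.reachRestr (N.IG I uc)}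

/-- The safe transition relation `R = {(s,t) ∈ I | ∃ s', s →t s' ∧ s, s' ∈ G}`. -/
def safeRel (I : Set (Set P × T)) (uc : Set T) : Set (Set P × T) :=
  {p ∈ I | ∃ s', N.Step p.1 p.2 s' ∧ p.1 ∈ N.good I uc ∧ s' ∈ N.good I uc}

/-- The support function on joint local states `q = (l, Π)`:
`supp(q) = ⋂_{(s,C) ⊒ q} {t | (s,t) ∈ R}`, i.e. the transitions allowed by `R`
from every good global state subsuming `q`. -/
def supp (I : Set (Set P × T)) (uc : Set T) (C : Set (Set T))
    (q : Set P × Set (Set T)) : Set T :=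
  {t | ∀ s ∈ N.good I uc, N.locState C q.2 s = q.1 → (s, t) ∈ N.safeRel I uc}

/-- The set `L` of joint local states `(s⌊_Π, Π)` for `s ∈ G`, `Π ⊆ C`. -/
def jointLoc (I : Set (Set P × T)) (uc : Set T) (C : Set (Set T)) :
    Set (Set P × Set (Set T)) :=
  {q | ∃ s ∈ N.good I uc, ∃ Pi, Pi ⊆ C ∧ q = (N.locState C Pi s, Pi)}

/-- `q ⊑ q'`: both arise from the same good global state `s` and the process
set of `q` is included in that of `q'`. -/
def Subsumed (I : Set (Set P × T)) (uc : Set T) (C : Set (Set T))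
    (q q' : Set P × Set (Set T)) : Prop :=
  ∃ s ∈ N.good I uc, q.2 ⊆ q'.2 ∧ q'.2 ⊆ C ∧
    q = (N.locState C q.2 s, q.2) ∧ q' = (N.locState C q'.2 s, q'.2)

/-- `vis(π) = {t | (•t ∪ t•) ∩ ngb(π) ≠ ∅}`. -/
def vis (π : Set T) : Set T := {t | (N.inp t ∪ N.out t) ∩ N.ngb {π} ≠ ∅}

open Classical in
/-- The projection of a transition sequence onto the transitions visible to `π`. -/
noncomputable def projVis (π : Set T) : List T → List T
  | [] => []
  | t :: l => if t ∈ N.vis π then t :: projVis π l else projVis π l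

/-- `h` is a history: a finite prefix of an execution of `N`. -/
def IsHist (h : Hist P T) : Prop :=
  h.state 0 = N.s0 ∧ ∀ i < h.len, N.Step (h.state i) (h.trans i) (h.state (i + 1))

end PetriNet

namespace Hist

variable {P T : Type}

/-- The sequence of transitions of a history. -/
def transList (h : Hist P T) : List T := (List.range h.len).map h.trans

/-- The last state of a history. -/
def last (h : Hist P T) : Set P := h.state h.len

end Hist

namespace PetriNet

variable {P T : Type} (N : PetriNet P T)

theorem attr_iterate_mono (I : Set (Set P × T)) (uc : Set T) :
    Monotone fun n : ℕ => (N.attr I uc)^[n] ∅ := by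
  refine monotone_nat_of_le_succ fun n => ?_
  rw [Function.iterate_succ_apply']
  exact fun s hs => Or.inl hs

theorem good_not_mem_attrStar {I : Set (Set P × T)} {uc : Set T} {s : Set P}
    (hs : s ∈ N.good I uc) : s ∉ N.attrStar I uc := by
  obtain ⟨h0, r, ⟨⟨⟨hr0, hstep⟩, hI⟩, -⟩, i, hi, rfl⟩ := hs
  cases i with
  | zero => rwa [hr0]
  | succ j =>
    have hj : (j : ℕ∞) < r.len := lt_of_lt_of_le (by exact_mod_cast j.lt_succ_self) hi
    rw [(hstep j hj).2]
    exact (hI j hj).2.2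

/-- Outside the attractor, every non-deadlock has an `I_G`-step. Finiteness of `T` is what makes
the `ω`-iteration `attrStar` closed under the universal clause of `attr`. -/
theorem exists_IG_step [Fintype T] {I : Set (Set P × T)} {uc : Set T} {s : Set P}
    (hs : s ∉ N.attrStar I uc) (hnd : ¬ N.Deadlock s) : ∃ t, (s, t) ∈ N.IG I uc := by
  by_contra! hno
  have hex : ∀ t, ∃ n : ℕ, N.Enabled s t → (s, t) ∈ I →
      N.fire s t ∈ (N.attr I uc)^[n] ∅ := by
    intro t
    by_cases h : N.Enabled s t ∧ (s, t) ∈ I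
    · have hf : N.fire s t ∈ N.attrStar I uc := by
        by_contra hf
        exact hno t ⟨h.2, h.1, hf⟩
      obtain ⟨n, hn⟩ := Set.mem_iUnion.1 hf
      exact ⟨n, fun _ _ => hn⟩
    · exact ⟨0, fun h1 h2 => absurd ⟨h1, h2⟩ h⟩
  choose n hn using hex
  refine hs (Set.mem_iUnion.2 ⟨Finset.univ.sup n + 1, ?_⟩)
  rw [Function.iterate_succ_apply']
  exact Or.inr (Or.inr ⟨hnd, fun t he hi =>
    N.attr_iterate_mono I uc (Finset.le_sup (Finset.mem_univ t)) (hn t he hi)⟩)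

/-- The states visited from `s0` when the transition fired at time `n` in state `s` is `σ n s`. -/
def follow (σ : ℕ → Set P → T) : ℕ → Set P
  | 0 => N.s0
  | n + 1 => N.fire (follow σ n) (σ n (follow σ n))

/-- A `J`-step from a state on a `J`-restricted run leads to a state on a maximal one. -/
theorem fire_mem_reachRestr {J : Set (Set P × T)} {r : Run P T} (hr : N.IsRunRestr J r)
    {i : ℕ} (hi : (i : ℕ∞) ≤ r.len) {t : T} (he : N.Enabled (r.state i) t)
    (hJ : (r.state i, t) ∈ J) : N.fire (r.state i) t ∈ N.reachRestr J := by
  classical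
  obtain ⟨⟨hr0, hstep⟩, hrJ⟩ := hr
  have hc : ∀ s, ∃ u, (∃ u, N.Enabled s u ∧ (s, u) ∈ J) → N.Enabled s u ∧ (s, u) ∈ J := by
    intro s
    by_cases h : ∃ u, N.Enabled s u ∧ (s, u) ∈ J
    · exact ⟨h.choose, fun _ => h.choose_spec⟩
    · exact ⟨t, fun h' => absurd h' h⟩
  choose c hc using hc
  -- Copy `r` up to time `i`, fire `t` at time `i`, and pick `J`-steps greedily afterwards.
  let σ : ℕ → Set P → T := fun n s => if n < i then r.trans n else if n = i then t else c s
  have hlt : ∀ j : ℕ, j < i → (j : ℕ∞) < r.len := fun j hj =>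
    lt_of_lt_of_le (by exact_mod_cast hj) hi
  have hpre : ∀ j, j ≤ i → N.follow σ j = r.state j := by
    intro j
    induction j with
    | zero => exact fun _ => hr0.symm
    | succ j ih =>
      intro hj
      rw [follow, ih (by omega), (hstep j (hlt j hj)).2]
      simp [σ, Nat.lt_of_succ_le hj]
  have hsucc : N.follow σ (i + 1) = N.fire (r.state i) t := by
    rw [follow, hpre i le_rfl]
    simp [σ]
  -- The step at time `n` is a `J`-step unless `n > i` and no `J`-step is available.
  have hgood : ∀ n, (i + 1 ≤ n → ∃ u, N.Enabled (N.follow σ n) u ∧ (N.follow σ n, u) ∈ J) →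
      N.Enabled (N.follow σ n) (σ n (N.follow σ n)) ∧
        (N.follow σ n, σ n (N.follow σ n)) ∈ J := by
    intro n hn
    rcases lt_trichotomy n i with h | rfl | h
    · have hσ : σ n (N.follow σ n) = r.trans n := by simp [σ, h]
      rw [hσ, hpre n h.le]
      exact ⟨(hstep n (hlt n h)).1, hrJ n (hlt n h)⟩
    · have hσ : σ n (N.follow σ n) = t := by simp [σ]
      rw [hσ, hpre n le_rfl]
      exact ⟨he, hJ⟩
    · have hσ : σ n (N.follow σ n) = c (N.follow σ n) := by
        simp [σ, h.not_gt, h.ne']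
      rw [hσ]
      exact hc _ (hn h)
  -- The length is the first time after `i` at which no `J`-step is available, if there is one.
  obtain ⟨L, hL1, hL2, hL3⟩ : ∃ L : ℕ∞, ((i + 1 : ℕ) : ℕ∞) ≤ L ∧
      (∀ n : ℕ, (n : ℕ∞) < L → i + 1 ≤ n →
        ∃ u, N.Enabled (N.follow σ n) u ∧ (N.follow σ n, u) ∈ J) ∧
      ∀ n : ℕ, L = n → ¬ ∃ u, N.Enabled (N.follow σ n) u ∧ (N.follow σ n, u) ∈ J := by
    by_cases h : ∃ n, i + 1 ≤ n ∧ ¬ ∃ u, N.Enabled (N.follow σ n) u ∧ (N.follow σ n, u) ∈ J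
    · refine ⟨(Nat.find h : ℕ), by exact_mod_cast (Nat.find_spec h).1, fun n hn hin => ?_,
        fun n hn => ?_⟩
      · by_contra hstuck
        exact Nat.find_min h (by exact_mod_cast hn) ⟨hin, hstuck⟩
      · have hn' : Nat.find h = n := by exact_mod_cast hn
        exact hn' ▸ (Nat.find_spec h).2
    · refine ⟨⊤, le_top, fun n _ hin => ?_, fun n hn => absurd hn.symm (ENat.natCast_ne_top n)⟩
      by_contra hstuck
      exact h ⟨n, hin, hstuck⟩
  exact ⟨⟨L, N.follow σ, fun n => σ n (N.follow σ n)⟩,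
    ⟨⟨⟨rfl, fun n hn => ⟨(hgood n (hL2 n hn)).1, rfl⟩⟩, fun n hn => (hgood n (hL2 n hn)).2⟩, hL3⟩,
    i + 1, hL1, hsucc.symm⟩

end PetriNet

/-- the safe transition relation introduces no new deadlocks on
good states: if `s ∈ G` is not a deadlock of `N`, some `t` with `(s,t) ∈ R`
exists, i.e. `t` is enabled at `s`, `(s,t) ∈ I`, and `s →t s'` with `s' ∈ G`. -/
theorem safeRel_no_new_deadlock {P T : Type} [Fintype P] [Fintype T]
    (N : PetriNet P T) (I : Set (Set P × T)) (uc : Set T) (s : Set P)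
    (hs : s ∈ N.good I uc) (hnd : ¬ N.Deadlock s) :
    ∃ t s', (s, t) ∈ N.safeRel I uc ∧ N.Enabled s t ∧ (s, t) ∈ I ∧
      N.Step s t s' ∧ s' ∈ N.good I uc := by
  obtain ⟨t, ht⟩ := N.exists_IG_step (N.good_not_mem_attrStar hs) hnd
  have hs' : N.fire s t ∈ N.good I uc := by
    obtain ⟨h0, r, hr, i, hi, rfl⟩ := hs
    exact ⟨h0, N.fire_mem_reachRestr hr.1 hi ht.2.1 ht⟩
  have hstep : N.Step s t (N.fire s t) := ⟨ht.2.1, rfl⟩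
  exact ⟨t, N.fire s t, ⟨ht.1, _, hstep, hs, hs'⟩, ht.2.1, ht.1, hstep, hs'⟩
end

section
/- The spoiler can force progress into the attractor: for every n ≥ 0, if s ∈ attr^{n+1}(∅), then for every nonempty set C' of transitions enabled at s that contains all uncontrollable transitions enabled at s, there exists t ∈ C' such that either (s,t) ∉ I, or s →t s' with s' ∈ attr^n(∅). -/
/-!
The proof is by induction on `n`, splitting on why `s` lies in `attr (attr^n ∅)`.
If an uncontrollable transition is responsible, it belongs to `C'` and is the witness.
If all enabled `I`-respecting transitions lead into `attr^n ∅`, any element of `C'` works.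
If `s` already lies in `attr^n ∅`, then `n` is positive, and the transition given by the
induction hypothesis leads into `attr^(n-1) ∅ ⊆ attr^n ∅`.
-/

open Set

/-- the spoiler can force progress into the attractor: if
`s ∈ attr^{n+1}(∅)`, then from every nonempty set `C'` of enabled transitions
containing all enabled uncontrollable ones, the spoiler can pick `t ∈ C'`
violating `I` or leading into `attr^n(∅)`. -/
theorem spoiler_forces_attr {P T : Type} [Fintype P] [Fintype T]
    (N : PetriNet P T) (I : Set (Set P × T)) (uc : Set T)
    (n : ℕ) (s : Set P) (hs : s ∈ (N.attr I uc)^[n + 1] ∅)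
    (C' : Set T) (hne : C'.Nonempty)
    (hen : ∀ t ∈ C', N.Enabled s t)
    (hucC : ∀ t ∈ uc, N.Enabled s t → t ∈ C') :
    ∃ t ∈ C', (s, t) ∉ I ∨ ∃ s', N.Step s t s' ∧ s' ∈ (N.attr I uc)^[n] ∅ := by
  induction n with
  | zero =>
    rw [Function.iterate_succ_apply'] at hs
    rcases hs with h | ⟨t, htu, hte, h⟩ | ⟨-, h⟩
    · exact absurd h (Set.notMem_empty s)
    · exact ⟨t, hucC t htu hte, h.symm.imp_right fun hA => ⟨_, ⟨hte, rfl⟩, hA⟩⟩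
    · obtain ⟨t, ht⟩ := hne
      by_cases hI : (s, t) ∈ I
      · exact ⟨t, ht, Or.inr ⟨_, ⟨hen t ht, rfl⟩, h t (hen t ht) hI⟩⟩
      · exact ⟨t, ht, Or.inl hI⟩
  | succ m ih =>
    rw [Function.iterate_succ_apply'] at hs
    rcases hs with h | ⟨t, htu, hte, h⟩ | ⟨-, h⟩
    · obtain ⟨t, ht, hI | ⟨s', hstep, hs'⟩⟩ := ih h
      · exact ⟨t, ht, Or.inl hI⟩
      · refine ⟨t, ht, Or.inr ⟨s', hstep, ?_⟩⟩
        -- `attr` is inflationary: its first disjunct is membership in the argument.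
        rw [Function.iterate_succ_apply']
        exact Or.inl hs'
    · exact ⟨t, hucC t htu hte, h.symm.imp_right fun hA => ⟨_, ⟨hte, rfl⟩, hA⟩⟩
    · obtain ⟨t, ht⟩ := hne
      by_cases hI : (s, t) ∈ I
      · exact ⟨t, ht, Or.inr ⟨_, ⟨hen t ht, rfl⟩, h t (hen t ht) hI⟩⟩
      · exact ⟨t, ht, Or.inl hI⟩
end

section
/- History equivalence refines weak state equivalence: for any process π and any two histories h, h' of a 1-safe Petri net, if h ≈_π h' (their transition sequences project to the same sequence over vis(π)), then the final states are weakly equivalent for π: last(h) ∩ ngb(π) = last(h') ∩ ngb(π). -/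
/-!
Restricting to the neighborhood `B` of `π` is compatible with firing: `fire s t ∩ B` depends on `s`
only through `s ∩ B`, and equals `s ∩ B` when `t` is invisible to `π`, since then `•t ∪ t•` misses
`B`. Hence replaying a transition sequence and replaying its projection onto `vis(π)` give the same
result on `B` (`foldl_fire_inter_ngb`). As the last state of a history is the replay of its
transition sequence from the initial state, it is determined on `B` by the projection.
-/

open Set

namespace PetriNet

variable {P T : Type} (N : PetriNet P T)

lemma fire_inter_congr {s s' B : Set P} (t : T) (hs : s ∩ B = s' ∩ B) :
    N.fire s t ∩ B = N.fire s' t ∩ B := by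
  ext p
  have hp := Set.ext_iff.mp hs p
  simp only [fire, mem_inter_iff, mem_union, mem_sdiff] at hp ⊢
  tauto

lemma fire_inter_ngb_of_notMem_vis {π : Set T} {t : T} (ht : t ∉ N.vis π) (s : Set P) :
    N.fire s t ∩ N.ngb {π} = s ∩ N.ngb {π} := by
  have hdisj : (N.inp t ∪ N.out t) ∩ N.ngb {π} = ∅ := not_not.mp ht
  ext p
  have hp := Set.ext_iff.mp hdisj p
  simp only [fire, mem_inter_iff, mem_union, mem_sdiff, mem_empty_iff_false] at hp ⊢
  tauto

/-- Dropping the transitions invisible to `π` from a firing sequence does not change the resulting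
state on `ngb(π)`. Enabledness plays no role. Two start states that agree only on `ngb(π)` are
allowed because the states diverge outside `ngb(π)` once a transition has been dropped. -/
lemma foldl_fire_inter_ngb (π : Set T) (l : List T) (s s' : Set P)
    (hs : s ∩ N.ngb {π} = s' ∩ N.ngb {π}) :
    l.foldl N.fire s ∩ N.ngb {π} = (N.projVis π l).foldl N.fire s' ∩ N.ngb {π} := by
  induction l generalizing s s' with
  | nil => exact hs
  | cons t l ih =>
    by_cases ht : t ∈ N.vis π
    · simp only [projVis, if_pos ht, List.foldl_cons]
      exact ih _ _ (N.fire_inter_congr t hs)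
    · simp only [projVis, if_neg ht, List.foldl_cons]
      exact ih _ _ ((N.fire_inter_ngb_of_notMem_vis ht s).trans hs)

lemma IsHist.last_eq_foldl {N : PetriNet P T} {h : Hist P T} (hh : N.IsHist h) :
    h.last = h.transList.foldl N.fire N.s0 := by
  have key : ∀ n ≤ h.len, h.state n = ((List.range n).map h.trans).foldl N.fire N.s0 := by
    intro n
    induction n with
    | zero => intro _; simpa using hh.1
    | succ n ih =>
      intro hn
      rw [(hh.2 n hn).2, ih (by omega)]
      simp [List.range_succ]
  exact key h.len le_rfl

end PetriNet

/-- history equivalence refines weak state equivalence: if two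
histories project to the same sequence of transitions visible to `π`, then
their final states agree on the neighborhood of `π`. -/
theorem last_weak_equiv_of_hist_equiv {P T : Type} [Fintype P] [Fintype T]
    (N : PetriNet P T) (π : Set T) (h h' : Hist P T)
    (hh : N.IsHist h) (hh' : N.IsHist h')
    (heq : N.projVis π h.transList = N.projVis π h'.transList) :
    h.last ∩ N.ngb {π} = h'.last ∩ N.ngb {π} := by
  rw [hh.last_eq_foldl, hh'.last_eq_foldl, N.foldl_fire_inter_ngb π _ _ _ rfl, heq,
    ← N.foldl_fire_inter_ngb π _ _ _ rfl]
end
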